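/- arXiv:1605.03995 — 2 statements merged into one kernel-verified Lean document; each statement's English description precedes it below -/
import Mathlib

section
/- There exists a Hopf algebra structure on K over k whose comultiplication, counit and antipode satisfy Δ(a) = a⊗a + b⊗c, Δ(b) = a⊗b + b⊗d, Δ(c) = c⊗a + d⊗c, Δ(d) = c⊗b + d⊗d, ε(a) = ε(d) = 1, ε(b) = ε(c) = 0, S(a) = d, S(b) = ξb, S(c) = −ξc, S(d) = a. -/
open scoped TensorProduct

/-- Generators of the Hopf algebra `K`. -/
inductive KGen : Type
  | a | b | c | d

open FreeAlgebra in
/-- The defining relations of the algebra `K`. -/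
inductive KRel (𝕜 : Type) [Field 𝕜] (ξ : 𝕜) :
    FreeAlgebra 𝕜 KGen → FreeAlgebra 𝕜 KGen → Prop
  | ab : KRel 𝕜 ξ (ι 𝕜 KGen.a * ι 𝕜 KGen.b) (ξ • (ι 𝕜 KGen.b * ι 𝕜 KGen.a))
  | ac : KRel 𝕜 ξ (ι 𝕜 KGen.a * ι 𝕜 KGen.c) (ξ • (ι 𝕜 KGen.c * ι 𝕜 KGen.a))
  | cb : KRel 𝕜 ξ (ι 𝕜 KGen.c * ι 𝕜 KGen.b) 0
  | bc : KRel 𝕜 ξ (ι 𝕜 KGen.b * ι 𝕜 KGen.c) 0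
  | cd : KRel 𝕜 ξ (ι 𝕜 KGen.c * ι 𝕜 KGen.d) (ξ • (ι 𝕜 KGen.d * ι 𝕜 KGen.c))
  | bd : KRel 𝕜 ξ (ι 𝕜 KGen.b * ι 𝕜 KGen.d) (ξ • (ι 𝕜 KGen.d * ι 𝕜 KGen.b))
  | adcomm : KRel 𝕜 ξ (ι 𝕜 KGen.a * ι 𝕜 KGen.d) (ι 𝕜 KGen.d * ι 𝕜 KGen.a)
  | adone : KRel 𝕜 ξ (ι 𝕜 KGen.a * ι 𝕜 KGen.d) 1
  | bsq : KRel 𝕜 ξ (ι 𝕜 KGen.b * ι 𝕜 KGen.b) 0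
  | csq : KRel 𝕜 ξ (ι 𝕜 KGen.c * ι 𝕜 KGen.c) 0
  | aac : KRel 𝕜 ξ (ι 𝕜 KGen.a * ι 𝕜 KGen.a * ι 𝕜 KGen.c) (ι 𝕜 KGen.b)
  | afour : KRel 𝕜 ξ (ι 𝕜 KGen.a ^ 4) 1

/-- The 8-dimensional algebra `K`, the smallest Hopf algebra whose coradical is not a
subalgebra, presented by generators and relations. -/
abbrev KAlg (𝕜 : Type) [Field 𝕜] (ξ : 𝕜) : Type := RingQuot (KRel 𝕜 ξ)

variable (𝕜 : Type) [Field 𝕜] (ξ : 𝕜)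

/-- The generator `a` of `K`. -/
noncomputable def kA : KAlg 𝕜 ξ := RingQuot.mkAlgHom 𝕜 (KRel 𝕜 ξ) (FreeAlgebra.ι 𝕜 KGen.a)
/-- The generator `b` of `K`. -/
noncomputable def kB : KAlg 𝕜 ξ := RingQuot.mkAlgHom 𝕜 (KRel 𝕜 ξ) (FreeAlgebra.ι 𝕜 KGen.b)
/-- The generator `c` of `K`. -/
noncomputable def kC : KAlg 𝕜 ξ := RingQuot.mkAlgHom 𝕜 (KRel 𝕜 ξ) (FreeAlgebra.ι 𝕜 KGen.c)
/-- The generator `d` of `K`. -/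
noncomputable def kD : KAlg 𝕜 ξ := RingQuot.mkAlgHom 𝕜 (KRel 𝕜 ξ) (FreeAlgebra.ι 𝕜 KGen.d)

/-- The comultiplication of `K` takes the prescribed values on the generators. -/
def KComulOn (Δ : KAlg 𝕜 ξ →ₐ[𝕜] KAlg 𝕜 ξ ⊗[𝕜] KAlg 𝕜 ξ) : Prop :=
  Δ (kA 𝕜 ξ) = kA 𝕜 ξ ⊗ₜ[𝕜] kA 𝕜 ξ + kB 𝕜 ξ ⊗ₜ[𝕜] kC 𝕜 ξ ∧
  Δ (kB 𝕜 ξ) = kA 𝕜 ξ ⊗ₜ[𝕜] kB 𝕜 ξ + kB 𝕜 ξ ⊗ₜ[𝕜] kD 𝕜 ξ ∧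
  Δ (kC 𝕜 ξ) = kC 𝕜 ξ ⊗ₜ[𝕜] kA 𝕜 ξ + kD 𝕜 ξ ⊗ₜ[𝕜] kC 𝕜 ξ ∧
  Δ (kD 𝕜 ξ) = kC 𝕜 ξ ⊗ₜ[𝕜] kB 𝕜 ξ + kD 𝕜 ξ ⊗ₜ[𝕜] kD 𝕜 ξ

/-- The counit of `K` takes the prescribed values on the generators. -/
def KCounitOn (ε : KAlg 𝕜 ξ →ₐ[𝕜] 𝕜) : Prop :=
  ε (kA 𝕜 ξ) = 1 ∧ ε (kB 𝕜 ξ) = 0 ∧ ε (kC 𝕜 ξ) = 0 ∧ ε (kD 𝕜 ξ) = 1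

/-!
As an algebra, `K` is generated by `a` and `c` alone, with relations `a⁴ = 1`, `ac = ξca`, `c² = 0`:
the other generators are `b = a²c` and `d = a³`. Hence each structure map is determined by its
values at `a` and `c`, and only those three relations have to be checked.

For the comultiplication everything rests on `ξ² = -1`: the two summands of `a ⊗ a + b ⊗ c` commute
up to `ξ · ξ`, hence anticommute, and so do those of `c ⊗ a + d ⊗ c`. Squaring therefore produces
no mixed terms: `Δ(a)² = a² ⊗ a²` and `Δ(c)² = 0`. The values of `Δ` at `b` and `d` follow from
`Δ(a)²Δ(c)` and `Δ(a)³`.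

Coassociativity and the counit axioms compare algebra maps. The antipode `S` is an antihomomorphism,
so if `∑ S(x₁)x₂ = ε(x)`, then `∑ S(x₁y₁)x₂y₂ = ∑ S(y₁)(∑ S(x₁)x₂)y₂ = ε(x) ∑ S(y₁)y₂`; thus the
antipode axioms also need checking only at `a` and `c`.
-/

section Counit

open Coalgebra

variable {R C : Type*} [CommSemiring R] [AddCommMonoid C] [Module R C] [Coalgebra R C]

theorem lid_comp_rTensor_counit_comp_comul :
    (TensorProduct.lid R C).toLinearMap ∘ₗ (counit (R := R) (A := C)).rTensor C ∘ₗ comul =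
      LinearMap.id := by
  rw [rTensor_counit_comp_comul]
  ext
  simp

theorem rid_comp_lTensor_counit_comp_comul :
    (TensorProduct.rid R C).toLinearMap ∘ₗ (counit (R := R) (A := C)).lTensor C ∘ₗ comul =
      LinearMap.id := by
  rw [lTensor_counit_comp_comul]
  ext
  simp

end Counit

section AntipodeFromGenerators

open Coalgebra

variable {R A : Type*} [CommSemiring R] [Semiring A]

section Algebra

variable [Algebra R A] (S : A →ₐ[R] Aᵐᵒᵖ)

/-- An algebra antihomomorphism, encoded as an algebra map to the opposite algebra, regarded as a
linear endomorphism. This is the form in which an antipode is prescribed on generators. -/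
def antihomLinearMap : A →ₗ[R] A :=
  (MulOpposite.opLinearEquiv R).symm.toLinearMap ∘ₗ S.toLinearMap

@[simp]
theorem antihomLinearMap_apply (x : A) : antihomLinearMap S x = (S x).unop :=
  rfl

theorem mul'_rTensor_antihom_mul_tmul (t : A ⊗[R] A) (x y : A) :
    LinearMap.mul' R A ((antihomLinearMap S).rTensor A (t * x ⊗ₜ y)) =
      (S x).unop * LinearMap.mul' R A ((antihomLinearMap S).rTensor A t) * y := by
  induction t using TensorProduct.induction_on with
  | zero => simp
  | tmul z w => simp [mul_assoc]
  | add t u ht hu => simp only [add_mul, mul_add, map_add, ht, hu]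

theorem mul'_lTensor_antihom_tmul_mul (x y : A) (t : A ⊗[R] A) :
    LinearMap.mul' R A ((antihomLinearMap S).lTensor A (x ⊗ₜ y * t)) =
      x * LinearMap.mul' R A ((antihomLinearMap S).lTensor A t) * (S y).unop := by
  induction t using TensorProduct.induction_on with
  | zero => simp
  | tmul z w => simp [mul_assoc]
  | add t u ht hu => simp only [add_mul, mul_add, map_add, ht, hu]

theorem mul'_rTensor_antihom_mul {t : A ⊗[R] A} {r : R}
    (ht : LinearMap.mul' R A ((antihomLinearMap S).rTensor A t) = algebraMap R A r)
    (u : A ⊗[R] A) :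
    LinearMap.mul' R A ((antihomLinearMap S).rTensor A (t * u)) =
      r • LinearMap.mul' R A ((antihomLinearMap S).rTensor A u) := by
  induction u using TensorProduct.induction_on with
  | zero => simp
  | tmul x y =>
    rw [mul'_rTensor_antihom_mul_tmul, ht, ← Algebra.commutes, mul_assoc, ← Algebra.smul_def]
    simp
  | add u v hu hv => simp only [mul_add, map_add, hu, hv, smul_add]

theorem mul'_lTensor_antihom_mul {u : A ⊗[R] A} {r : R}
    (hu : LinearMap.mul' R A ((antihomLinearMap S).lTensor A u) = algebraMap R A r)
    (t : A ⊗[R] A) :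
    LinearMap.mul' R A ((antihomLinearMap S).lTensor A (t * u)) =
      r • LinearMap.mul' R A ((antihomLinearMap S).lTensor A t) := by
  induction t using TensorProduct.induction_on with
  | zero => simp
  | tmul x y =>
    rw [mul'_lTensor_antihom_tmul_mul, hu, ← Algebra.commutes, mul_assoc, ← Algebra.smul_def]
    simp
  | add t v ht hv => simp only [add_mul, map_add, ht, hv, smul_add]

end Algebra

variable [Bialgebra R A] (S : A →ₐ[R] Aᵐᵒᵖ) {s : Set A}

theorem mul'_rTensor_antihom_comul_of_adjoin_eq_top (hs : Algebra.adjoin R s = ⊤)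
    (h : ∀ x ∈ s, LinearMap.mul' R A ((antihomLinearMap S).rTensor A (comul (R := R) x)) =
      algebraMap R A (counit x)) (x : A) :
    LinearMap.mul' R A ((antihomLinearMap S).rTensor A (comul (R := R) x)) =
      algebraMap R A (counit x) := by
  induction (hs ▸ Algebra.mem_top : x ∈ Algebra.adjoin R s) using Algebra.adjoin_induction with
  | mem x hx => exact h x hx
  | algebraMap r => simp [Algebra.TensorProduct.algebraMap_apply]
  | add x y _ _ hx hy => simp only [map_add, hx, hy]
  | mul x y _ _ hx hy =>
    rw [Bialgebra.comul_mul, mul'_rTensor_antihom_mul S hx, hy, Bialgebra.counit_mul, map_mul,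
      Algebra.smul_def]

theorem mul'_lTensor_antihom_comul_of_adjoin_eq_top (hs : Algebra.adjoin R s = ⊤)
    (h : ∀ x ∈ s, LinearMap.mul' R A ((antihomLinearMap S).lTensor A (comul (R := R) x)) =
      algebraMap R A (counit x)) (x : A) :
    LinearMap.mul' R A ((antihomLinearMap S).lTensor A (comul (R := R) x)) =
      algebraMap R A (counit x) := by
  induction (hs ▸ Algebra.mem_top : x ∈ Algebra.adjoin R s) using Algebra.adjoin_induction with
  | mem x hx => exact h x hx
  | algebraMap r => simp [Algebra.TensorProduct.algebraMap_apply]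
  | add x y _ _ hx hy => simp only [map_add, hx, hy]
  | mul x y _ _ hx hy =>
    rw [Bialgebra.comul_mul, mul'_lTensor_antihom_mul S hy, hx, Bialgebra.counit_mul, map_mul,
      Algebra.smul_def, Algebra.commutes]

/-- The Hopf algebra structure on a bialgebra whose antipode is an algebra antihomomorphism
satisfying the antipode axioms on a set of algebra generators. -/
noncomputable abbrev hopfAlgebraOfAdjoinEqTop (hs : Algebra.adjoin R s = ⊤)
    (hleft : ∀ x ∈ s, LinearMap.mul' R A ((antihomLinearMap S).rTensor A (comul (R := R) x)) =
      algebraMap R A (counit x))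
    (hright : ∀ x ∈ s, LinearMap.mul' R A ((antihomLinearMap S).lTensor A (comul (R := R) x)) =
      algebraMap R A (counit x)) : HopfAlgebra R A where
  antipode := antihomLinearMap S
  mul_antipode_rTensor_comul :=
    LinearMap.ext (mul'_rTensor_antihom_comul_of_adjoin_eq_top S hs hleft)
  mul_antipode_lTensor_comul :=
    LinearMap.ext (mul'_lTensor_antihom_comul_of_adjoin_eq_top S hs hright)

end AntipodeFromGenerators

section SkewCommutation

theorem add_mul_self_of_anticommute {R : Type*} [NonUnitalNonAssocSemiring R] {x y : R}
    (h : x * y + y * x = 0) : (x + y) * (x + y) = x * x + y * y := by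
  rw [add_mul, mul_add, mul_add, ← add_zero (x * x + y * y), ← h]
  abel

variable {R A : Type*} [CommSemiring R] [Semiring A] [Algebra R A]

theorem pow_mul_eq_smul_mul_pow {q : R} {x z : A} (h : x * z = q • (z * x)) (n : ℕ) :
    x ^ n * z = q ^ n • (z * x ^ n) := by
  induction n with
  | zero => simp
  | succ n ih =>
    rw [pow_succ, mul_assoc, h, mul_smul_comm, ← mul_assoc, ih, smul_mul_assoc, smul_smul,
      ← pow_succ', mul_assoc]

theorem mul_pow_mul_self_eq_zero {q : R} {x z : A} (h : x * z = q • (z * x)) (hz : z * z = 0)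
    (n : ℕ) : z * x ^ n * z = 0 := by
  rw [mul_assoc, pow_mul_eq_smul_mul_pow h, mul_smul_comm, ← mul_assoc, hz, zero_mul, smul_zero]

theorem tmul_anticommute {R A B : Type*} [CommRing R] [Semiring A] [Algebra R A] [Semiring B]
    [Algebra R B] {q r : R} {x y : A} {z w : B} (hxy : x * y = q • (y * x))
    (hzw : z * w = r • (w * z)) (hqr : q * r = -1) :
    (x ⊗ₜ[R] z) * (y ⊗ₜ[R] w) + (y ⊗ₜ[R] w) * (x ⊗ₜ[R] z) = 0 := by
  simp only [Algebra.TensorProduct.tmul_mul_tmul, hxy, hzw, TensorProduct.smul_tmul_smul, hqr]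
  calc (-1 : R) • (y * x) ⊗ₜ[R] (w * z) + (y * x) ⊗ₜ[R] (w * z)
    _ = ((-1 : R) + 1) • (y * x) ⊗ₜ[R] (w * z) := by rw [add_smul, one_smul]
    _ = 0 := by rw [neg_add_cancel, zero_smul]

end SkewCommutation

namespace KAlg

variable {𝕜 ξ}

local notation "𝐚" => kA 𝕜 ξ
local notation "𝐛" => kB 𝕜 ξ
local notation "𝐜" => kC 𝕜 ξ
local notation "𝐝" => kD 𝕜 ξ

section Relations

theorem a_mul_b : 𝐚 * 𝐛 = ξ • (𝐛 * 𝐚) := by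
  simpa only [map_mul, map_smul] using! RingQuot.mkAlgHom_rel 𝕜 (KRel.ab (𝕜 := 𝕜) (ξ := ξ))

theorem a_mul_c : 𝐚 * 𝐜 = ξ • (𝐜 * 𝐚) := by
  simpa only [map_mul, map_smul] using! RingQuot.mkAlgHom_rel 𝕜 (KRel.ac (𝕜 := 𝕜) (ξ := ξ))

theorem c_mul_b : 𝐜 * 𝐛 = 0 := by
  simpa only [map_mul, map_zero] using! RingQuot.mkAlgHom_rel 𝕜 (KRel.cb (𝕜 := 𝕜) (ξ := ξ))

theorem b_mul_c : 𝐛 * 𝐜 = 0 := by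
  simpa only [map_mul, map_zero] using! RingQuot.mkAlgHom_rel 𝕜 (KRel.bc (𝕜 := 𝕜) (ξ := ξ))

theorem c_mul_d : 𝐜 * 𝐝 = ξ • (𝐝 * 𝐜) := by
  simpa only [map_mul, map_smul] using! RingQuot.mkAlgHom_rel 𝕜 (KRel.cd (𝕜 := 𝕜) (ξ := ξ))

theorem a_mul_d : 𝐚 * 𝐝 = 1 := by
  simpa only [map_mul, map_one] using! RingQuot.mkAlgHom_rel 𝕜 (KRel.adone (𝕜 := 𝕜) (ξ := ξ))

theorem d_mul_a : 𝐝 * 𝐚 = 1 := by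
  have h : 𝐚 * 𝐝 = 𝐝 * 𝐚 := by
    simpa only [map_mul] using! RingQuot.mkAlgHom_rel 𝕜 (KRel.adcomm (𝕜 := 𝕜) (ξ := ξ))
  rw [← h, a_mul_d]

theorem b_mul_b : 𝐛 * 𝐛 = 0 := by
  simpa only [map_mul, map_zero] using! RingQuot.mkAlgHom_rel 𝕜 (KRel.bsq (𝕜 := 𝕜) (ξ := ξ))

theorem c_mul_c : 𝐜 * 𝐜 = 0 := by
  simpa only [map_mul, map_zero] using! RingQuot.mkAlgHom_rel 𝕜 (KRel.csq (𝕜 := 𝕜) (ξ := ξ))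

theorem a_sq_mul_c : 𝐚 ^ 2 * 𝐜 = 𝐛 := by
  rw [pow_two]
  simpa only [map_mul] using! RingQuot.mkAlgHom_rel 𝕜 (KRel.aac (𝕜 := 𝕜) (ξ := ξ))

theorem a_pow_four : 𝐚 ^ 4 = 1 := by
  simpa only [map_pow, map_one] using! RingQuot.mkAlgHom_rel 𝕜 (KRel.afour (𝕜 := 𝕜) (ξ := ξ))

theorem a_pow_three : 𝐚 ^ 3 = 𝐝 := by
  rw [← mul_one (𝐚 ^ 3), ← a_mul_d, ← mul_assoc, ← pow_succ, a_pow_four, one_mul]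

theorem a_sq_mul_b : 𝐚 ^ 2 * 𝐛 = 𝐜 := by
  rw [← a_sq_mul_c, ← mul_assoc, ← pow_add, a_pow_four, one_mul]

theorem a_sq_mul_d : 𝐚 ^ 2 * 𝐝 = 𝐚 := by
  rw [pow_two, mul_assoc, a_mul_d, mul_one]

theorem d_sq : 𝐝 ^ 2 = 𝐚 ^ 2 := by
  rw [← a_pow_three, ← pow_mul, show 3 * 2 = 4 + 2 from rfl, pow_add, a_pow_four, one_mul]

theorem d_pow_three : 𝐝 ^ 3 = 𝐚 := by
  rw [pow_succ, d_sq, a_sq_mul_d]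

theorem d_pow_four : 𝐝 ^ 4 = 1 := by
  rw [pow_succ, d_pow_three, a_mul_d]

theorem adjoin_a_c : Algebra.adjoin 𝕜 {𝐚, 𝐜} = ⊤ := by
  refine Algebra.eq_top_iff.mpr fun x => ?_
  have ha : 𝐚 ∈ Algebra.adjoin 𝕜 {𝐚, 𝐜} := Algebra.subset_adjoin (by simp)
  have hc : 𝐜 ∈ Algebra.adjoin 𝕜 {𝐚, 𝐜} := Algebra.subset_adjoin (by simp)
  have hb : 𝐛 ∈ Algebra.adjoin 𝕜 {𝐚, 𝐜} := a_sq_mul_c (𝕜 := 𝕜) ▸ mul_mem (pow_mem ha 2) hc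
  have hd : 𝐝 ∈ Algebra.adjoin 𝕜 {𝐚, 𝐜} := a_pow_three (𝕜 := 𝕜) ▸ pow_mem ha 3
  obtain ⟨x, rfl⟩ := RingQuot.mkAlgHom_surjective 𝕜 (KRel 𝕜 ξ) x
  induction x using FreeAlgebra.induction with
  | grade0 r => simpa only [AlgHom.commutes] using Subalgebra.algebraMap_mem _ r
  | grade1 g =>
    cases g with
    | a => exact ha
    | b => exact hb
    | c => exact hc
    | d => exact hd
  | mul x y hx hy => exact map_mul (RingQuot.mkAlgHom 𝕜 (KRel 𝕜 ξ)) x y ▸ mul_mem hx hy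
  | add x y hx hy => exact map_add (RingQuot.mkAlgHom 𝕜 (KRel 𝕜 ξ)) x y ▸ add_mem hx hy

end Relations

section Lift

variable {A : Type*} [Semiring A] [Algebra 𝕜 A]

theorem algHom_ext {f g : KAlg 𝕜 ξ →ₐ[𝕜] A} (ha : f 𝐚 = g 𝐚) (hc : f 𝐜 = g 𝐜) : f = g :=
  AlgHom.ext_of_adjoin_eq_top adjoin_a_c (by simp [Set.EqOn, ha, hc])

/-- The images of the generators of `K` under the algebra map determined by `a ↦ x`, `c ↦ z`. -/
def genImage (x z : A) : KGen → A
  | .a => x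
  | .b => x ^ 2 * z
  | .c => z
  | .d => x ^ 3

theorem lift_genImage_eq_of_rel {x z : A} (hx : x ^ 4 = 1) (hxz : x * z = ξ • (z * x))
    (hz : z * z = 0) ⦃p q : FreeAlgebra 𝕜 KGen⦄ (h : KRel 𝕜 ξ p q) :
    FreeAlgebra.lift 𝕜 (genImage x z) p = FreeAlgebra.lift 𝕜 (genImage x z) q := by
  have hzxz : z * x ^ 2 * z = 0 := mul_pow_mul_self_eq_zero hxz hz 2
  have hξz : ξ ^ 4 • z = z := by simpa [hx] using (pow_mul_eq_smul_mul_pow hxz 4).symm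
  have hcd : z * x ^ 3 = ξ • (x ^ 3 * z) := by
    rw [pow_mul_eq_smul_mul_pow hxz, smul_smul, ← pow_succ', ← smul_mul_assoc, hξz]
  cases h <;>
    simp only [map_mul, map_smul, map_pow, map_zero, map_one, FreeAlgebra.lift_ι_apply, genImage]
  case ab => rw [← mul_assoc, ← pow_succ', pow_succ, mul_assoc, hxz, mul_smul_comm, mul_assoc]
  case ac => exact hxz
  case cb => rw [← mul_assoc, hzxz]
  case bc => rw [mul_assoc, hz, mul_zero]
  case cd => exact hcd
  case bd =>
    rw [mul_assoc, hcd, mul_smul_comm, ← mul_assoc, ← mul_assoc, ← pow_add, ← pow_add]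
  case adcomm => rw [← pow_succ', ← pow_succ]
  case adone => rw [← pow_succ', hx]
  case bsq => rw [mul_assoc, ← mul_assoc z, hzxz, mul_zero]
  case csq => exact hz
  case aac => rw [pow_two]
  case afour => exact hx

/-- The universal property of `K`: as an algebra it is presented by the generators `a` and `c` with
the relations `a⁴ = 1`, `ac = ξca` and `c² = 0`. -/
noncomputable def lift {x z : A} (hx : x ^ 4 = 1) (hxz : x * z = ξ • (z * x)) (hz : z * z = 0) :
    KAlg 𝕜 ξ →ₐ[𝕜] A :=
  RingQuot.liftAlgHom 𝕜
    ⟨FreeAlgebra.lift 𝕜 (genImage x z), lift_genImage_eq_of_rel hx hxz hz⟩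

variable {x z : A} (hx : x ^ 4 = 1) (hxz : x * z = ξ • (z * x)) (hz : z * z = 0)

theorem lift_a : lift hx hxz hz 𝐚 = x := by
  simp [lift, kA, genImage]

theorem lift_b : lift hx hxz hz 𝐛 = x ^ 2 * z := by
  simp [lift, kB, genImage]

theorem lift_c : lift hx hxz hz 𝐜 = z := by
  simp [lift, kC, genImage]

theorem lift_d : lift hx hxz hz 𝐝 = x ^ 3 := by
  simp [lift, kD, genImage]

end Lift

section Comul

variable (𝕜 ξ) in
/-- The prescribed value `a ⊗ a + b ⊗ c` of the comultiplication at `a`. -/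
noncomputable def comulA : KAlg 𝕜 ξ ⊗[𝕜] KAlg 𝕜 ξ := 𝐚 ⊗ₜ 𝐚 + 𝐛 ⊗ₜ 𝐜

variable (𝕜 ξ) in
/-- The prescribed value `c ⊗ a + d ⊗ c` of the comultiplication at `c`. -/
noncomputable def comulC : KAlg 𝕜 ξ ⊗[𝕜] KAlg 𝕜 ξ := 𝐜 ⊗ₜ 𝐚 + 𝐝 ⊗ₜ 𝐜

theorem comulA_mul_comulC : comulA 𝕜 ξ * comulC 𝕜 ξ = ξ • (comulC 𝕜 ξ * comulA 𝕜 ξ) := by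
  have hAC : comulA 𝕜 ξ * comulC 𝕜 ξ = (𝐚 * 𝐜) ⊗ₜ (𝐚 * 𝐚) + 1 ⊗ₜ (𝐚 * 𝐜) := by
    simp [comulA, comulC, mul_add, add_mul, a_mul_d, b_mul_c, c_mul_c]
  have hCA : comulC 𝕜 ξ * comulA 𝕜 ξ = (𝐜 * 𝐚) ⊗ₜ (𝐚 * 𝐚) + 1 ⊗ₜ (𝐜 * 𝐚) := by
    simp [comulA, comulC, mul_add, add_mul, d_mul_a, c_mul_b, c_mul_c]
  rw [hAC, hCA, a_mul_c, smul_add, ← TensorProduct.smul_tmul', TensorProduct.tmul_smul]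

theorem comulA_sq (hξ : ξ ^ 2 = -1) : comulA 𝕜 ξ ^ 2 = (𝐚 ^ 2) ⊗ₜ (𝐚 ^ 2) := by
  have hanti : (𝐚 ⊗ₜ[𝕜] 𝐚) * (𝐛 ⊗ₜ[𝕜] 𝐜) + (𝐛 ⊗ₜ[𝕜] 𝐜) * (𝐚 ⊗ₜ[𝕜] 𝐚) = 0 :=
    tmul_anticommute a_mul_b a_mul_c (pow_two ξ ▸ hξ)
  rw [pow_two, comulA, add_mul_self_of_anticommute hanti]
  simp [b_mul_b, pow_two]

theorem comulA_pow_four (hξ : ξ ^ 2 = -1) : comulA 𝕜 ξ ^ 4 = 1 := by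
  rw [show 4 = 2 * 2 from rfl, pow_mul, comulA_sq hξ, Algebra.TensorProduct.tmul_pow, ← pow_mul,
    a_pow_four, Algebra.TensorProduct.one_def]

theorem comulA_sq_mul_comulC (hξ : ξ ^ 2 = -1) : comulA 𝕜 ξ ^ 2 * comulC 𝕜 ξ = 𝐚 ⊗ₜ 𝐛 + 𝐛 ⊗ₜ 𝐝 := by
  rw [comulA_sq hξ, comulC, mul_add, Algebra.TensorProduct.tmul_mul_tmul,
    Algebra.TensorProduct.tmul_mul_tmul, a_sq_mul_c, a_sq_mul_d, ← pow_succ, a_pow_three, add_comm]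

theorem comulA_pow_three (hξ : ξ ^ 2 = -1) : comulA 𝕜 ξ ^ 3 = 𝐜 ⊗ₜ 𝐛 + 𝐝 ⊗ₜ 𝐝 := by
  rw [pow_succ, comulA_sq hξ, comulA, mul_add, Algebra.TensorProduct.tmul_mul_tmul,
    Algebra.TensorProduct.tmul_mul_tmul, a_sq_mul_b, a_sq_mul_c, ← pow_succ, a_pow_three, add_comm]

theorem comulC_mul_comulC (hξ : ξ ^ 2 = -1) : comulC 𝕜 ξ * comulC 𝕜 ξ = 0 := by
  have hanti : (𝐜 ⊗ₜ[𝕜] 𝐚) * (𝐝 ⊗ₜ[𝕜] 𝐜) + (𝐝 ⊗ₜ[𝕜] 𝐜) * (𝐜 ⊗ₜ[𝕜] 𝐚) = 0 :=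
    tmul_anticommute c_mul_d a_mul_c (pow_two ξ ▸ hξ)
  rw [comulC, add_mul_self_of_anticommute hanti]
  simp [c_mul_c]

/-- The comultiplication of `K`, determined by its values at `a` and `c`. -/
noncomputable def comulHom (hξ : ξ ^ 2 = -1) : KAlg 𝕜 ξ →ₐ[𝕜] KAlg 𝕜 ξ ⊗[𝕜] KAlg 𝕜 ξ :=
  lift (comulA_pow_four hξ) comulA_mul_comulC (comulC_mul_comulC hξ)

theorem comulHom_a (hξ : ξ ^ 2 = -1) : comulHom hξ 𝐚 = 𝐚 ⊗ₜ 𝐚 + 𝐛 ⊗ₜ 𝐜 :=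
  lift_a ..

theorem comulHom_b (hξ : ξ ^ 2 = -1) : comulHom hξ 𝐛 = 𝐚 ⊗ₜ 𝐛 + 𝐛 ⊗ₜ 𝐝 :=
  (lift_b ..).trans (comulA_sq_mul_comulC hξ)

theorem comulHom_c (hξ : ξ ^ 2 = -1) : comulHom hξ 𝐜 = 𝐜 ⊗ₜ 𝐚 + 𝐝 ⊗ₜ 𝐜 :=
  lift_c ..

theorem comulHom_d (hξ : ξ ^ 2 = -1) : comulHom hξ 𝐝 = 𝐜 ⊗ₜ 𝐛 + 𝐝 ⊗ₜ 𝐝 :=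
  (lift_d ..).trans (comulA_pow_three hξ)

end Comul

section Counit

variable (𝕜 ξ) in
/-- The counit of `K`, determined by `a ↦ 1` and `c ↦ 0`. -/
noncomputable def counitHom : KAlg 𝕜 ξ →ₐ[𝕜] 𝕜 :=
  lift (x := 1) (z := 0) (one_pow 4) (by simp) (mul_zero 0)

theorem counitHom_a : counitHom 𝕜 ξ 𝐚 = 1 :=
  lift_a ..

theorem counitHom_b : counitHom 𝕜 ξ 𝐛 = 0 :=
  (lift_b ..).trans (mul_zero _)

theorem counitHom_c : counitHom 𝕜 ξ 𝐜 = 0 :=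
  lift_c ..

theorem counitHom_d : counitHom 𝕜 ξ 𝐝 = 1 :=
  (lift_d ..).trans (one_pow 3)

end Counit

section Bialgebra

variable (hξ : ξ ^ 2 = -1)

theorem comulHom_coassoc :
    (Algebra.TensorProduct.assoc 𝕜 𝕜 𝕜 (KAlg 𝕜 ξ) (KAlg 𝕜 ξ) (KAlg 𝕜 ξ)).toAlgHom.comp
      ((Algebra.TensorProduct.map (comulHom hξ) (.id 𝕜 _)).comp (comulHom hξ)) =
    (Algebra.TensorProduct.map (.id 𝕜 _) (comulHom hξ)).comp (comulHom hξ) := by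
  apply algHom_ext <;>
    simp only [AlgHom.coe_comp, AlgEquiv.coe_toAlgHom, AlgHom.coe_id, Function.comp_apply, id_eq,
      map_add, comulHom_a, comulHom_b, comulHom_c, comulHom_d, TensorProduct.add_tmul,
      TensorProduct.tmul_add, Algebra.TensorProduct.map_tmul,
      Algebra.TensorProduct.assoc_tmul] <;>
    abel

theorem counitHom_rTensor_comp_comulHom :
    (Algebra.TensorProduct.map (counitHom 𝕜 ξ) (.id 𝕜 _)).comp (comulHom hξ) =
      (Algebra.TensorProduct.lid 𝕜 (KAlg 𝕜 ξ)).symm := by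
  apply algHom_ext <;>
    simp [comulHom_a, comulHom_c, counitHom_a, counitHom_b, counitHom_c, counitHom_d]

theorem counitHom_lTensor_comp_comulHom :
    (Algebra.TensorProduct.map (.id 𝕜 _) (counitHom 𝕜 ξ)).comp (comulHom hξ) =
      (Algebra.TensorProduct.rid 𝕜 𝕜 (KAlg 𝕜 ξ)).symm := by
  apply algHom_ext <;> simp [comulHom_a, comulHom_c, counitHom_a, counitHom_c]

/-- The bialgebra structure on `K`; it is not an instance because it needs `ξ² = -1`. -/
noncomputable abbrev bialgebra : Bialgebra 𝕜 (KAlg 𝕜 ξ) :=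
  .ofAlgHom (comulHom hξ) (counitHom 𝕜 ξ) (comulHom_coassoc hξ)
    (counitHom_rTensor_comp_comulHom hξ) (counitHom_lTensor_comp_comulHom hξ)

end Bialgebra

section Antipode

open MulOpposite (op)

variable (𝕜 ξ) in
/-- The antipode of `K`, as the algebra map to the opposite algebra determined by `a ↦ d` and
`c ↦ -ξc`. -/
noncomputable def antipodeHom : KAlg 𝕜 ξ →ₐ[𝕜] (KAlg 𝕜 ξ)ᵐᵒᵖ :=
  lift (x := op 𝐝) (z := op (-ξ • 𝐜))
    (by rw [← MulOpposite.op_pow, d_pow_four, MulOpposite.op_one])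
    (by rw [← MulOpposite.op_mul, ← MulOpposite.op_mul, ← MulOpposite.op_smul, smul_mul_assoc,
      c_mul_d, mul_smul_comm, smul_comm])
    (by rw [← MulOpposite.op_mul, smul_mul_assoc, mul_smul_comm, c_mul_c, smul_zero, smul_zero,
      MulOpposite.op_zero])

theorem antipodeHom_a : antipodeHom 𝕜 ξ 𝐚 = op 𝐝 :=
  lift_a ..

theorem antipodeHom_b (hξ : ξ ^ 2 = -1) : antipodeHom 𝕜 ξ 𝐛 = op (ξ • 𝐛) := by
  have h : (-ξ • 𝐜) * 𝐝 ^ 2 = ξ • 𝐛 := by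
    rw [d_sq, ← a_sq_mul_c, pow_mul_eq_smul_mul_pow a_mul_c, hξ, smul_smul, mul_neg_one,
      smul_mul_assoc]
  rw [antipodeHom, lift_b, ← MulOpposite.op_pow, ← MulOpposite.op_mul, h]

theorem antipodeHom_c : antipodeHom 𝕜 ξ 𝐜 = op (-ξ • 𝐜) :=
  lift_c ..

theorem antipodeHom_d : antipodeHom 𝕜 ξ 𝐝 = op 𝐚 :=
  (lift_d ..).trans (congrArg op d_pow_three)

theorem antipodeHom_rTensor_comulHom (hξ : ξ ^ 2 = -1) :
    ∀ x ∈ ({𝐚, 𝐜} : Set (KAlg 𝕜 ξ)),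
      LinearMap.mul' 𝕜 (KAlg 𝕜 ξ)
          ((antihomLinearMap (antipodeHom 𝕜 ξ)).rTensor (KAlg 𝕜 ξ) (comulHom hξ x)) =
        algebraMap 𝕜 (KAlg 𝕜 ξ) (counitHom 𝕜 ξ x) := by
  rintro x (rfl | rfl)
  · simp [comulHom_a, counitHom_a, antipodeHom_a, antipodeHom_b hξ, d_mul_a, b_mul_c]
  · simp [comulHom_c, counitHom_c, antipodeHom_c, antipodeHom_d, a_mul_c, ← add_smul]

theorem antipodeHom_lTensor_comulHom (hξ : ξ ^ 2 = -1) :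
    ∀ x ∈ ({𝐚, 𝐜} : Set (KAlg 𝕜 ξ)),
      LinearMap.mul' 𝕜 (KAlg 𝕜 ξ)
          ((antihomLinearMap (antipodeHom 𝕜 ξ)).lTensor (KAlg 𝕜 ξ) (comulHom hξ x)) =
        algebraMap 𝕜 (KAlg 𝕜 ξ) (counitHom 𝕜 ξ x) := by
  rintro x (rfl | rfl)
  · simp [comulHom_a, counitHom_a, antipodeHom_a, antipodeHom_c, a_mul_d, b_mul_c]
  · simp [comulHom_c, counitHom_c, antipodeHom_a, antipodeHom_c, c_mul_d, ← add_smul]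

/-- The Hopf algebra structure on `K`; it is not an instance because it needs `ξ² = -1`. -/
noncomputable abbrev hopfAlgebra (hξ : ξ ^ 2 = -1) : HopfAlgebra 𝕜 (KAlg 𝕜 ξ) :=
  letI := bialgebra hξ
  hopfAlgebraOfAdjoinEqTop (antipodeHom 𝕜 ξ) adjoin_a_c (antipodeHom_rTensor_comulHom hξ)
    (antipodeHom_lTensor_comulHom hξ)

end Antipode

end KAlg

theorem sq_eq_neg_one_of_isPrimitiveRoot_four {R : Type*} [CommRing R] [NoZeroDivisors R] {ζ : R}
    (h : IsPrimitiveRoot ζ 4) : ζ ^ 2 = -1 :=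
  (h.pow (by simp) (show 4 = 2 * 2 from rfl)).eq_neg_one_of_two_right

theorem stmt_1_general (𝕜 : Type) [Field 𝕜] (ξ : 𝕜) (hξ : ξ ^ 2 = -1) :
    ∃ (Δ : KAlg 𝕜 ξ →ₐ[𝕜] KAlg 𝕜 ξ ⊗[𝕜] KAlg 𝕜 ξ) (ε : KAlg 𝕜 ξ →ₐ[𝕜] 𝕜)
      (S : KAlg 𝕜 ξ →ₗ[𝕜] KAlg 𝕜 ξ),
      (TensorProduct.assoc 𝕜 (KAlg 𝕜 ξ) (KAlg 𝕜 ξ) (KAlg 𝕜 ξ)).toLinearMap ∘ₗ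
          TensorProduct.map Δ.toLinearMap LinearMap.id ∘ₗ Δ.toLinearMap =
        TensorProduct.map LinearMap.id Δ.toLinearMap ∘ₗ Δ.toLinearMap ∧
      (TensorProduct.lid 𝕜 (KAlg 𝕜 ξ)).toLinearMap ∘ₗ
          TensorProduct.map ε.toLinearMap LinearMap.id ∘ₗ Δ.toLinearMap = LinearMap.id ∧
      (TensorProduct.rid 𝕜 (KAlg 𝕜 ξ)).toLinearMap ∘ₗ
          TensorProduct.map LinearMap.id ε.toLinearMap ∘ₗ Δ.toLinearMap = LinearMap.id ∧
      LinearMap.mul' 𝕜 (KAlg 𝕜 ξ) ∘ₗ TensorProduct.map S LinearMap.id ∘ₗ Δ.toLinearMap =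
        Algebra.linearMap 𝕜 (KAlg 𝕜 ξ) ∘ₗ ε.toLinearMap ∧
      LinearMap.mul' 𝕜 (KAlg 𝕜 ξ) ∘ₗ TensorProduct.map LinearMap.id S ∘ₗ Δ.toLinearMap =
        Algebra.linearMap 𝕜 (KAlg 𝕜 ξ) ∘ₗ ε.toLinearMap ∧
      KComulOn 𝕜 ξ Δ ∧ KCounitOn 𝕜 ξ ε ∧
      S (kA 𝕜 ξ) = kD 𝕜 ξ ∧ S (kB 𝕜 ξ) = ξ • kB 𝕜 ξ ∧
      S (kC 𝕜 ξ) = -(ξ • kC 𝕜 ξ) ∧ S (kD 𝕜 ξ) = kA 𝕜 ξ := by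
  let := KAlg.hopfAlgebra hξ
  exact ⟨KAlg.comulHom hξ, KAlg.counitHom 𝕜 ξ, HopfAlgebra.antipode 𝕜, Coalgebra.coassoc,
    lid_comp_rTensor_counit_comp_comul, rid_comp_lTensor_counit_comp_comul,
    HopfAlgebra.mul_antipode_rTensor_comul, HopfAlgebra.mul_antipode_lTensor_comul,
    ⟨KAlg.comulHom_a hξ, KAlg.comulHom_b hξ, KAlg.comulHom_c hξ, KAlg.comulHom_d hξ⟩,
    ⟨KAlg.counitHom_a, KAlg.counitHom_b, KAlg.counitHom_c, KAlg.counitHom_d⟩,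
    congrArg MulOpposite.unop KAlg.antipodeHom_a,
    congrArg MulOpposite.unop (KAlg.antipodeHom_b hξ),
    (congrArg MulOpposite.unop KAlg.antipodeHom_c).trans (neg_smul ξ (kC 𝕜 ξ)),
    congrArg MulOpposite.unop KAlg.antipodeHom_d⟩

/-- There exists a Hopf algebra structure on `K` over `𝕜` (comultiplication
`Δ` and counit `ε` are algebra maps, `Δ` is coassociative with counit `ε`, and `S` is an
antipode) whose structure maps satisfy `Δ(a) = a⊗a + b⊗c`, `Δ(b) = a⊗b + b⊗d`,
`Δ(c) = c⊗a + d⊗c`, `Δ(d) = c⊗b + d⊗d`, `ε(a) = ε(d) = 1`, `ε(b) = ε(c) = 0`,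
`S(a) = d`, `S(b) = ξb`, `S(c) = -ξc`, `S(d) = a`. -/
theorem stmt_1 (𝕜 : Type) [Field 𝕜] [IsAlgClosed 𝕜] [CharZero 𝕜]
    (ξ : 𝕜) (hξ : IsPrimitiveRoot ξ 4) :
    ∃ (Δ : KAlg 𝕜 ξ →ₐ[𝕜] KAlg 𝕜 ξ ⊗[𝕜] KAlg 𝕜 ξ) (ε : KAlg 𝕜 ξ →ₐ[𝕜] 𝕜)
      (S : KAlg 𝕜 ξ →ₗ[𝕜] KAlg 𝕜 ξ),
      -- coassociativity
      (TensorProduct.assoc 𝕜 (KAlg 𝕜 ξ) (KAlg 𝕜 ξ) (KAlg 𝕜 ξ)).toLinearMap ∘ₗ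
          TensorProduct.map Δ.toLinearMap LinearMap.id ∘ₗ Δ.toLinearMap =
        TensorProduct.map LinearMap.id Δ.toLinearMap ∘ₗ Δ.toLinearMap ∧
      -- counit axioms
      (TensorProduct.lid 𝕜 (KAlg 𝕜 ξ)).toLinearMap ∘ₗ
          TensorProduct.map ε.toLinearMap LinearMap.id ∘ₗ Δ.toLinearMap = LinearMap.id ∧
      (TensorProduct.rid 𝕜 (KAlg 𝕜 ξ)).toLinearMap ∘ₗ
          TensorProduct.map LinearMap.id ε.toLinearMap ∘ₗ Δ.toLinearMap = LinearMap.id ∧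
      -- antipode axioms
      LinearMap.mul' 𝕜 (KAlg 𝕜 ξ) ∘ₗ TensorProduct.map S LinearMap.id ∘ₗ Δ.toLinearMap =
        Algebra.linearMap 𝕜 (KAlg 𝕜 ξ) ∘ₗ ε.toLinearMap ∧
      LinearMap.mul' 𝕜 (KAlg 𝕜 ξ) ∘ₗ TensorProduct.map LinearMap.id S ∘ₗ Δ.toLinearMap =
        Algebra.linearMap 𝕜 (KAlg 𝕜 ξ) ∘ₗ ε.toLinearMap ∧
      -- values on the generators
      KComulOn 𝕜 ξ Δ ∧ KCounitOn 𝕜 ξ ε ∧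
      S (kA 𝕜 ξ) = kD 𝕜 ξ ∧ S (kB 𝕜 ξ) = ξ • kB 𝕜 ξ ∧
      S (kC 𝕜 ξ) = -(ξ • kC 𝕜 ξ) ∧ S (kD 𝕜 ξ) = kA 𝕜 ξ :=
  stmt_1_general 𝕜 ξ (sq_eq_neg_one_of_isPrimitiveRoot_four hξ)
end

section
/- There is an isomorphism of k-coalgebras K ≅ C₄ ⊕ M*(2,k), where C₄ is the coalgebra with basis {1, G, X, GX}, Δ(1) = 1⊗1, Δ(G) = G⊗G, Δ(X) = X⊗G + 1⊗X, Δ(GX) = GX⊗1 + G⊗GX, ε(1) = ε(G) = 1, ε(X) = ε(GX) = 0 (the underlying coalgebra of Sweedler's 4-dimensional Hopf algebra), and M*(2,k) is the comatrix coalgebra with basis {e₁₁, e₁₂, e₂₁, e₂₂}, Δ(e_{ij}) = e_{i1}⊗e_{1j} + e_{i2}⊗e_{2j}, ε(e_{ij}) = δ_{ij}. -/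
open scoped TensorProduct

variable (𝕜 : Type) [Field 𝕜] (ξ : 𝕜)

/-- Index type for the basis of `C₄ ⊕ M*(2,𝕜)`: the four elements `1, G, X, GX` of the
Sweedler coalgebra and the four comatrix elements `e_{ij}`. -/
abbrev C4MIdx : Type := Fin 4 ⊕ Fin 2 × Fin 2

/-- The underlying vector space of `C₄ ⊕ M*(2,𝕜)`. -/
abbrev C4M (𝕜 : Type) [Field 𝕜] : Type := C4MIdx → 𝕜

/-- The standard basis vectors of `C₄ ⊕ M*(2,𝕜)`. -/
noncomputable def c4mE (𝕜 : Type) [Field 𝕜] (i : C4MIdx) : C4M 𝕜 := Pi.basisFun 𝕜 C4MIdx i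

/-- The comultiplication of the coalgebra `C₄ ⊕ M*(2,𝕜)`: on the Sweedler part
`Δ(1) = 1⊗1`, `Δ(G) = G⊗G`, `Δ(X) = X⊗G + 1⊗X`, `Δ(GX) = GX⊗1 + G⊗GX`; on the comatrix
part `Δ(e_{ij}) = e_{i1}⊗e_{1j} + e_{i2}⊗e_{2j}`. -/
noncomputable def c4mComul (𝕜 : Type) [Field 𝕜] : C4M 𝕜 →ₗ[𝕜] C4M 𝕜 ⊗[𝕜] C4M 𝕜 :=
  (Pi.basisFun 𝕜 C4MIdx).constr 𝕜 <| Sum.elim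
    ![c4mE 𝕜 (.inl 0) ⊗ₜ[𝕜] c4mE 𝕜 (.inl 0),
      c4mE 𝕜 (.inl 1) ⊗ₜ[𝕜] c4mE 𝕜 (.inl 1),
      c4mE 𝕜 (.inl 2) ⊗ₜ[𝕜] c4mE 𝕜 (.inl 1) + c4mE 𝕜 (.inl 0) ⊗ₜ[𝕜] c4mE 𝕜 (.inl 2),
      c4mE 𝕜 (.inl 3) ⊗ₜ[𝕜] c4mE 𝕜 (.inl 0) + c4mE 𝕜 (.inl 1) ⊗ₜ[𝕜] c4mE 𝕜 (.inl 3)]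
    (fun p => c4mE 𝕜 (.inr (p.1, 0)) ⊗ₜ[𝕜] c4mE 𝕜 (.inr (0, p.2)) +
      c4mE 𝕜 (.inr (p.1, 1)) ⊗ₜ[𝕜] c4mE 𝕜 (.inr (1, p.2)))

/-- The counit of the coalgebra `C₄ ⊕ M*(2,𝕜)`: `ε(1) = ε(G) = 1`, `ε(X) = ε(GX) = 0`,
`ε(e_{ij}) = δ_{ij}`. -/
noncomputable def c4mCounit (𝕜 : Type) [Field 𝕜] : C4M 𝕜 →ₗ[𝕜] 𝕜 :=
  (Pi.basisFun 𝕜 C4MIdx).constr 𝕜 <| Sum.elim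
    ![(1 : 𝕜), 1, 0, 0] (fun p => if p.1 = (p.2 : Fin 2) then (1 : 𝕜) else 0)


/-!
`K` is generated by `a` and `c` subject to `a⁴ = 1`, `c² = 0`, `ac = ξca`, with `b = a²c` and
`d = a³`. The monomials `aⁱcʲ` with `i < 4`, `j < 2` clearly span it. They are independent because,
for the generator `t` of `𝕜[t]/(t⁴ - 1)`, the representation `a ↦ diag(t, ξ⁻¹t)`, `c ↦ e₀₁`
sends `aⁱcʲ` to a matrix with top row `tⁱeⱼ`.

The eight monomials are `a, b, c, d`, which form a comatrix coalgebra, and `1, a², ac, a³c`,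
which play the roles of `1, G, X, GX`. The one step that needs `ξ² = -1` is that `a²` is grouplike:
in `Δ(a) = a ⊗ a + b ⊗ c` the two summands commute up to `ξ²`, and `b ⊗ c` squares to zero.
-/

section General

theorem mul_pow_eq_smul_of_mul_eq_smul {F A : Type*} [Semifield F] [Semiring A] [Algebra F A]
    {q : F} (hq : q ≠ 0) {x z : A} (h : x * z = q • (z * x)) (n : ℕ) :
    z * x ^ n = q⁻¹ ^ n • (x ^ n * z) := by
  have semiconj : SemiconjBy z x (q⁻¹ • x) := by
    rw [SemiconjBy, smul_mul_assoc, h, inv_smul_smul₀ hq]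
  rw [(semiconj.pow_right n).eq, smul_pow, smul_mul_assoc]

theorem adjoin_toSubmodule_le_of_mul_mem {R A : Type*} [CommSemiring R] [Semiring A] [Algebra R A]
    {s : Set A} {S : Submodule R A} (one_mem : 1 ∈ S) (mul_mem : ∀ g ∈ s, ∀ y ∈ S, g * y ∈ S) :
    Subalgebra.toSubmodule (Algebra.adjoin R s) ≤ S := by
  rw [Algebra.adjoin_eq_span, Submodule.span_le]
  intro w hw
  induction hw using Submonoid.closure_induction_left with
  | one => exact one_mem
  | mul_left g hg y _ hy => exact mul_mem g hg y hy

theorem add_sq_of_mul_eq_smul {R A : Type*} [Semiring R] [Semiring A] [Module R A]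
    {q : R} (hq : q + 1 = 0) {u v : A} (h : u * v = q • (v * u)) :
    (u + v) ^ 2 = u ^ 2 + v ^ 2 := by
  calc (u + v) ^ 2 = u ^ 2 + v ^ 2 + (u * v + v * u) := by
        simp only [sq, add_mul, mul_add]; abel
    _ = u ^ 2 + v ^ 2 + (q + 1) • (v * u) := by rw [h, add_smul, one_smul]
    _ = u ^ 2 + v ^ 2 := by rw [hq, zero_smul, add_zero]

open Polynomial in
theorem linearIndependent_root_X_pow_sub_C_pow {R : Type*} [CommRing R] [Nontrivial R] (r : R)
    {n : ℕ} (hn : n ≠ 0) :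
    LinearIndependent R fun i : Fin n => AdjoinRoot.root (X ^ n - C r) ^ (i : ℕ) := by
  have basis := (AdjoinRoot.powerBasis' (monic_X_pow_sub_C r hn)).basis.linearIndependent
  rw [PowerBasis.coe_basis] at basis
  have dim : n = (AdjoinRoot.powerBasis' (monic_X_pow_sub_C r hn)).dim := by
    rw [AdjoinRoot.powerBasis'_dim, natDegree_X_pow_sub_C]
  exact basis.comp (finCongr dim) (finCongr dim).injective

theorem pow_four_eq_one_of_sq_eq_neg_one {M : Type*} [Monoid M] [HasDistribNeg M] {x : M}
    (h : x ^ 2 = -1) : x ^ 4 = 1 := by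
  rw [show 4 = 2 * 2 from rfl, pow_mul, h, neg_one_sq]

end General

section C4M

variable {𝕜}

theorem c4mComul_c4mE_inl (i : Fin 4) : c4mComul 𝕜 (c4mE 𝕜 (.inl i)) =
    ![c4mE 𝕜 (.inl 0) ⊗ₜ[𝕜] c4mE 𝕜 (.inl 0),
      c4mE 𝕜 (.inl 1) ⊗ₜ[𝕜] c4mE 𝕜 (.inl 1),
      c4mE 𝕜 (.inl 2) ⊗ₜ[𝕜] c4mE 𝕜 (.inl 1) + c4mE 𝕜 (.inl 0) ⊗ₜ[𝕜] c4mE 𝕜 (.inl 2),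
      c4mE 𝕜 (.inl 3) ⊗ₜ[𝕜] c4mE 𝕜 (.inl 0) + c4mE 𝕜 (.inl 1) ⊗ₜ[𝕜] c4mE 𝕜 (.inl 3)] i :=
  Module.Basis.constr_basis _ _ _ _

theorem c4mComul_c4mE_inr (i j : Fin 2) : c4mComul 𝕜 (c4mE 𝕜 (.inr (i, j))) =
    ∑ l, c4mE 𝕜 (.inr (i, l)) ⊗ₜ[𝕜] c4mE 𝕜 (.inr (l, j)) :=
  (Module.Basis.constr_basis _ _ _ _).trans
    (Fin.sum_univ_two fun l => c4mE 𝕜 (.inr (i, l)) ⊗ₜ[𝕜] c4mE 𝕜 (.inr (l, j))).symm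

theorem c4mCounit_c4mE_inl (i : Fin 4) :
    c4mCounit 𝕜 (c4mE 𝕜 (.inl i)) = ![(1 : 𝕜), 1, 0, 0] i :=
  Module.Basis.constr_basis _ _ _ _

theorem c4mCounit_c4mE_inr (i j : Fin 2) :
    c4mCounit 𝕜 (c4mE 𝕜 (.inr (i, j))) = if i = j then (1 : 𝕜) else 0 :=
  Module.Basis.constr_basis _ _ _ _

end C4M

namespace KAlg

variable {𝕜 ξ}

theorem kA_mul_kB : kA 𝕜 ξ * kB 𝕜 ξ = ξ • (kB 𝕜 ξ * kA 𝕜 ξ) := by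
  simpa [kA, kB] using RingQuot.mkAlgHom_rel 𝕜 (KRel.ab (ξ := ξ))

theorem kA_mul_kC : kA 𝕜 ξ * kC 𝕜 ξ = ξ • (kC 𝕜 ξ * kA 𝕜 ξ) := by
  simpa [kA, kC] using RingQuot.mkAlgHom_rel 𝕜 (KRel.ac (ξ := ξ))

theorem kB_mul_kC : kB 𝕜 ξ * kC 𝕜 ξ = 0 := by
  simpa [kB, kC] using RingQuot.mkAlgHom_rel 𝕜 (KRel.bc (ξ := ξ))

theorem kA_mul_kD : kA 𝕜 ξ * kD 𝕜 ξ = 1 := by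
  simpa [kA, kD] using RingQuot.mkAlgHom_rel 𝕜 (KRel.adone (ξ := ξ))

theorem kC_sq : kC 𝕜 ξ ^ 2 = 0 := by
  simpa [kC, sq] using RingQuot.mkAlgHom_rel 𝕜 (KRel.csq (ξ := ξ))

theorem kA_sq_mul_kC : kA 𝕜 ξ ^ 2 * kC 𝕜 ξ = kB 𝕜 ξ := by
  simpa [kA, kB, kC, sq] using RingQuot.mkAlgHom_rel 𝕜 (KRel.aac (ξ := ξ))

theorem kA_pow_four : kA 𝕜 ξ ^ 4 = 1 := by
  simpa [kA] using RingQuot.mkAlgHom_rel 𝕜 (KRel.afour (ξ := ξ))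

theorem kA_pow_three : kA 𝕜 ξ ^ 3 = kD 𝕜 ξ := by
  calc kA 𝕜 ξ ^ 3 = kA 𝕜 ξ ^ 3 * (kA 𝕜 ξ * kD 𝕜 ξ) := by rw [kA_mul_kD, mul_one]
    _ = kA 𝕜 ξ ^ 4 * kD 𝕜 ξ := by rw [← mul_assoc, ← pow_succ]
    _ = kD 𝕜 ξ := by rw [kA_pow_four, one_mul]

variable (𝕜 ξ) in
theorem adjoin_kA_kC : Algebra.adjoin 𝕜 {kA 𝕜 ξ, kC 𝕜 ξ} = ⊤ := by
  set S := Algebra.adjoin 𝕜 {kA 𝕜 ξ, kC 𝕜 ξ}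
  have a_mem : kA 𝕜 ξ ∈ S := Algebra.subset_adjoin (by simp)
  have c_mem : kC 𝕜 ξ ∈ S := Algebra.subset_adjoin (by simp)
  rw [eq_top_iff, ← (AlgHom.range_eq_top _).2 (RingQuot.mkAlgHom_surjective 𝕜 (KRel 𝕜 ξ)),
    ← Algebra.map_top, ← FreeAlgebra.adjoin_range_ι, AlgHom.map_adjoin, Algebra.adjoin_le_iff]
  rintro _ ⟨_, ⟨g, rfl⟩, rfl⟩
  cases g with
  | a => exact a_mem
  | b =>
    change kB 𝕜 ξ ∈ S
    exact kA_sq_mul_kC (𝕜 := 𝕜) ▸ mul_mem (pow_mem a_mem 2) c_mem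
  | c => exact c_mem
  | d =>
    change kD 𝕜 ξ ∈ S
    exact kA_pow_three (𝕜 := 𝕜) ▸ pow_mem a_mem 3

section Lift

variable {A : Type*} [Semiring A] [Algebra 𝕜 A] {x z : A}

/-- The values on the generators `a, b, c, d` of the homomorphism out of `K` determined by its
values `x` and `z` on `a` and `c`. -/
def liftGen (x z : A) : KGen → A
  | .a => x
  | .b => x ^ 2 * z
  | .c => z
  | .d => x ^ 3

theorem lift_liftGen_eq_of_KRel (hξ : ξ ^ 4 = 1) (hx : x ^ 4 = 1) (hz : z ^ 2 = 0)
    (hxz : x * z = ξ • (z * x)) ⦃u v : FreeAlgebra 𝕜 KGen⦄ (huv : KRel 𝕜 ξ u v) :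
    FreeAlgebra.lift 𝕜 (liftGen x z) u = FreeAlgebra.lift 𝕜 (liftGen x z) v := by
  have ξ_ne : ξ ≠ 0 := (IsUnit.of_pow_eq_one hξ four_ne_zero).ne_zero
  have inv_pow_three : ξ⁻¹ ^ 3 = ξ := by
    rw [inv_pow, inv_eq_of_mul_eq_one_left]
    rw [← pow_succ', hξ]
  have z_mul_pow := mul_pow_eq_smul_of_mul_eq_smul ξ_ne hxz
  have z_mul_pow_mul_z (n : ℕ) : z * (x ^ n * z) = 0 := by
    rw [← mul_assoc, z_mul_pow, smul_mul_assoc, mul_assoc, ← sq, hz, mul_zero, smul_zero]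
  cases huv <;> simp only [map_mul, map_smul, map_pow, map_zero, map_one,
    FreeAlgebra.lift_ι_apply, liftGen]
  case ab =>
    rw [mul_assoc, ← mul_smul_comm, ← hxz, ← mul_assoc, ← mul_assoc, ← pow_succ, ← pow_succ']
  case ac => exact hxz
  case cb => exact z_mul_pow_mul_z 2
  case bc => rw [mul_assoc, ← sq, hz, mul_zero]
  case cd => rw [z_mul_pow, inv_pow_three]
  case bd =>
    rw [mul_assoc, z_mul_pow, inv_pow_three, mul_smul_comm, ← mul_assoc, ← mul_assoc, ← pow_add,
      ← pow_add]
  case adcomm => rw [← pow_succ, ← pow_succ']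
  case adone => rw [← pow_succ', hx]
  case bsq => rw [mul_assoc, z_mul_pow_mul_z, mul_zero]
  case csq => rw [← sq, hz]
  case aac => rw [sq]
  case afour => exact hx

theorem exists_algHom_apply_kA_kC (hξ : ξ ^ 4 = 1) (hx : x ^ 4 = 1) (hz : z ^ 2 = 0)
    (hxz : x * z = ξ • (z * x)) :
    ∃ f : KAlg 𝕜 ξ →ₐ[𝕜] A, f (kA 𝕜 ξ) = x ∧ f (kC 𝕜 ξ) = z :=
  ⟨RingQuot.liftAlgHom 𝕜 ⟨FreeAlgebra.lift 𝕜 (liftGen x z), lift_liftGen_eq_of_KRel hξ hx hz hxz⟩,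
    by simp [kA, liftGen], by simp [kC, liftGen]⟩

end Lift

variable (𝕜 ξ) in
/-- The PBW monomials `aⁱcʲ`, `i < 4`, `j < 2`. -/
noncomputable def monomial (p : Fin 4 × Fin 2) : KAlg 𝕜 ξ :=
  kA 𝕜 ξ ^ (p.1 : ℕ) * kC 𝕜 ξ ^ (p.2 : ℕ)

theorem kA_pow_mul_kC_pow_mem_span_monomial (m n : ℕ) :
    kA 𝕜 ξ ^ m * kC 𝕜 ξ ^ n ∈ Submodule.span 𝕜 (Set.range (monomial 𝕜 ξ)) := by
  rcases lt_or_ge n 2 with hn | hn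
  · rw [pow_eq_pow_mod m kA_pow_four]
    exact Submodule.subset_span ⟨(⟨m % 4, Nat.mod_lt _ (by simp)⟩, ⟨n, hn⟩), rfl⟩
  · rw [pow_eq_zero_of_le hn kC_sq, mul_zero]
    exact zero_mem _

theorem span_monomial (hξ : ξ ≠ 0) : Submodule.span 𝕜 (Set.range (monomial 𝕜 ξ)) = ⊤ := by
  rw [eq_top_iff, ← Algebra.top_toSubmodule, ← adjoin_kA_kC]
  refine adjoin_toSubmodule_le_of_mul_mem
    (by simpa using kA_pow_mul_kC_pow_mem_span_monomial (𝕜 := 𝕜) (ξ := ξ) 0 0) fun g hg => ?_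
  change Submodule.span 𝕜 (Set.range (monomial 𝕜 ξ)) ≤
    (Submodule.span 𝕜 (Set.range (monomial 𝕜 ξ))).comap (LinearMap.mulLeft 𝕜 g)
  rw [Submodule.span_le]
  rintro _ ⟨⟨i, j⟩, rfl⟩
  change g * (kA 𝕜 ξ ^ (i : ℕ) * kC 𝕜 ξ ^ (j : ℕ)) ∈
    Submodule.span 𝕜 (Set.range (monomial 𝕜 ξ))
  rcases hg with rfl | rfl
  · rw [← mul_assoc, ← pow_succ']
    exact kA_pow_mul_kC_pow_mem_span_monomial _ _
  · rw [← mul_assoc, mul_pow_eq_smul_of_mul_eq_smul hξ kA_mul_kC, smul_mul_assoc, mul_assoc,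
      ← pow_succ']
    exact Submodule.smul_mem _ _ (kA_pow_mul_kC_pow_mem_span_monomial _ _)

theorem exists_matrix_algHom {R : Type*} [CommSemiring R] [Algebra 𝕜 R] (hξ : ξ ^ 4 = 1) {t : R}
    (ht : t ^ 4 = 1) :
    ∃ θ : KAlg 𝕜 ξ →ₐ[𝕜] Matrix (Fin 2) (Fin 2) R,
      θ (kA 𝕜 ξ) = Matrix.diagonal ![t, ξ⁻¹ • t] ∧ θ (kC 𝕜 ξ) = Matrix.single 0 1 1 := by
  have ξ_ne : ξ ≠ 0 := (IsUnit.of_pow_eq_one hξ four_ne_zero).ne_zero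
  apply exists_algHom_apply_kA_kC hξ
  · rw [Matrix.diagonal_pow, ← Matrix.diagonal_one, Matrix.diagonal_eq_diagonal_iff]
    intro i
    fin_cases i <;> simp [smul_pow, ht, hξ]
  · rw [sq, Matrix.single_mul_single_of_ne _ _ _ _ (by decide)]
  · ext i j
    fin_cases i <;> fin_cases j <;> simp [Matrix.single, smul_smul, ξ_ne]

theorem linearIndependent_monomial_of_linearIndependent_pow {R : Type*} [CommSemiring R]
    [Algebra 𝕜 R] (hξ : ξ ^ 4 = 1) {t : R} (ht : t ^ 4 = 1)
    (linearIndependent_t : LinearIndependent 𝕜 fun i : Fin 4 => t ^ (i : ℕ)) :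
    LinearIndependent 𝕜 (monomial 𝕜 ξ) := by
  obtain ⟨θ, θ_a, θ_c⟩ := exists_matrix_algHom hξ ht
  let topRow := LinearMap.proj (R := 𝕜) 0 ∘ₗ θ.toLinearMap
  have topRow_monomial :
      topRow ∘ monomial 𝕜 ξ = fun p => t ^ (p.1 : ℕ) • Pi.basisFun R (Fin 2) p.2 := by
    ext ⟨i, j⟩ k
    change θ (kA 𝕜 ξ ^ (i : ℕ) * kC 𝕜 ξ ^ (j : ℕ)) 0 k = _
    rw [map_mul, map_pow, map_pow, θ_a, θ_c, Matrix.diagonal_pow, Matrix.diagonal_mul]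
    fin_cases j <;> fin_cases k <;> simp
  apply LinearIndependent.of_comp topRow
  rw [topRow_monomial]
  exact linearIndependent_smul (b := fun i : Fin 4 => t ^ (i : ℕ)) linearIndependent_t
    (Pi.basisFun R (Fin 2)).linearIndependent

theorem linearIndependent_monomial (hξ : ξ ^ 4 = 1) : LinearIndependent 𝕜 (monomial 𝕜 ξ) :=
  linearIndependent_monomial_of_linearIndependent_pow hξ
    ((root_X_pow_sub_C_pow 4 (1 : 𝕜)).trans (map_one _))
    (linearIndependent_root_X_pow_sub_C_pow 1 four_ne_zero)

/-- The PBW basis of `K`. -/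
noncomputable def pbwBasis (hξ : ξ ^ 4 = 1) : Module.Basis (Fin 4 × Fin 2) 𝕜 (KAlg 𝕜 ξ) :=
  .mk (linearIndependent_monomial hξ)
    (span_monomial (IsUnit.of_pow_eq_one hξ four_ne_zero).ne_zero).ge

theorem pbwBasis_apply (hξ : ξ ^ 4 = 1) (p : Fin 4 × Fin 2) :
    pbwBasis hξ p = kA 𝕜 ξ ^ (p.1 : ℕ) * kC 𝕜 ξ ^ (p.2 : ℕ) :=
  Module.Basis.mk_apply _ _ p

/-- The matching of the basis `1, G, X, GX, e_{ij}` of `C₄ ⊕ M*(2,𝕜)` with the exponents of the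
monomials `1, a², ac, a³c` and `a, a²c, c, a³`. -/
noncomputable def monomialIdx : C4MIdx ≃ Fin 4 × Fin 2 :=
  .ofBijective (Sum.elim ![(0, 0), (2, 0), (1, 1), (3, 1)]
    fun p => !![(1, 0), (2, 1); (0, 1), (3, 0)] p.1 p.2) (by decide)

variable (hξ : ξ ^ 2 = -1)

/-- The PBW basis of `K`, indexed as the standard basis of `C₄ ⊕ M*(2,𝕜)`. -/
noncomputable def c4mBasis : Module.Basis C4MIdx 𝕜 (KAlg 𝕜 ξ) :=
  (pbwBasis (pow_four_eq_one_of_sq_eq_neg_one hξ)).reindex monomialIdx.symm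

theorem c4mBasis_inl (i : Fin 4) : c4mBasis hξ (.inl i) =
    ![1, kA 𝕜 ξ ^ 2, kA 𝕜 ξ * kC 𝕜 ξ, kA 𝕜 ξ ^ 3 * kC 𝕜 ξ] i := by
  fin_cases i <;> simp [c4mBasis, monomialIdx, pbwBasis_apply]

theorem c4mBasis_inr (i j : Fin 2) : c4mBasis hξ (.inr (i, j)) =
    !![kA 𝕜 ξ, kB 𝕜 ξ; kC 𝕜 ξ, kD 𝕜 ξ] i j := by
  fin_cases i <;> fin_cases j <;>
    simp [c4mBasis, monomialIdx, pbwBasis_apply, kA_sq_mul_kC, kA_pow_three]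

/-- The linear isomorphism `K ≃ C₄ ⊕ M*(2,𝕜)` matching `c4mBasis` with the standard basis. -/
noncomputable def c4mEquiv : KAlg 𝕜 ξ ≃ₗ[𝕜] C4M 𝕜 :=
  (c4mBasis hξ).equiv (Pi.basisFun 𝕜 C4MIdx) (Equiv.refl _)

theorem c4mEquiv_c4mBasis (i : C4MIdx) : c4mEquiv hξ (c4mBasis hξ i) = c4mE 𝕜 i := by
  rw [c4mEquiv, Module.Basis.equiv_apply, c4mE, Equiv.refl_apply]

section Coalgebra

variable {Δ : KAlg 𝕜 ξ →ₐ[𝕜] KAlg 𝕜 ξ ⊗[𝕜] KAlg 𝕜 ξ} {ε : KAlg 𝕜 ξ →ₐ[𝕜] 𝕜}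

include hξ in
theorem comul_kA_sq (hΔ : KComulOn 𝕜 ξ Δ) :
    Δ (kA 𝕜 ξ ^ 2) = (kA 𝕜 ξ ^ 2) ⊗ₜ[𝕜] (kA 𝕜 ξ ^ 2) := by
  have skew : (kA 𝕜 ξ ⊗ₜ[𝕜] kA 𝕜 ξ) * (kB 𝕜 ξ ⊗ₜ[𝕜] kC 𝕜 ξ) =
      ξ ^ 2 • ((kB 𝕜 ξ ⊗ₜ[𝕜] kC 𝕜 ξ) * (kA 𝕜 ξ ⊗ₜ[𝕜] kA 𝕜 ξ)) := by
    rw [Algebra.TensorProduct.tmul_mul_tmul, Algebra.TensorProduct.tmul_mul_tmul, kA_mul_kB,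
      kA_mul_kC, TensorProduct.smul_tmul_smul, ← sq]
  have sq_add_one : ξ ^ 2 + 1 = 0 := by rw [hξ, neg_add_cancel]
  rw [map_pow, hΔ.1, add_sq_of_mul_eq_smul sq_add_one skew, Algebra.TensorProduct.tmul_pow,
    Algebra.TensorProduct.tmul_pow, kC_sq, TensorProduct.tmul_zero, add_zero]

theorem comul_kA_mul_kC (hΔ : KComulOn 𝕜 ξ Δ) :
    Δ (kA 𝕜 ξ * kC 𝕜 ξ) =
      (kA 𝕜 ξ * kC 𝕜 ξ) ⊗ₜ[𝕜] (kA 𝕜 ξ ^ 2) + 1 ⊗ₜ[𝕜] (kA 𝕜 ξ * kC 𝕜 ξ) := by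
  obtain ⟨Δ_a, -, Δ_c, -⟩ := hΔ
  simp only [map_mul, Δ_a, Δ_c, mul_add, add_mul, Algebra.TensorProduct.tmul_mul_tmul, kA_mul_kD,
    kB_mul_kC, ← sq, kC_sq, TensorProduct.zero_tmul, TensorProduct.tmul_zero, add_zero]

include hξ in
theorem comul_kA_pow_three_mul_kC (hΔ : KComulOn 𝕜 ξ Δ) :
    Δ (kA 𝕜 ξ ^ 3 * kC 𝕜 ξ) =
      (kA 𝕜 ξ ^ 3 * kC 𝕜 ξ) ⊗ₜ[𝕜] 1 + (kA 𝕜 ξ ^ 2) ⊗ₜ[𝕜] (kA 𝕜 ξ ^ 3 * kC 𝕜 ξ) := by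
  have factor : kA 𝕜 ξ ^ 3 * kC 𝕜 ξ = kA 𝕜 ξ ^ 2 * (kA 𝕜 ξ * kC 𝕜 ξ) := by
    rw [← mul_assoc, ← pow_succ]
  rw [factor, map_mul, comul_kA_sq hξ hΔ, comul_kA_mul_kC hΔ, mul_add,
    Algebra.TensorProduct.tmul_mul_tmul, Algebra.TensorProduct.tmul_mul_tmul, ← pow_add,
    kA_pow_four, mul_one]

theorem comul_c4mBasis_inl (hΔ : KComulOn 𝕜 ξ Δ) (i : Fin 4) :
    Δ (c4mBasis hξ (.inl i)) =
      ![c4mBasis hξ (.inl 0) ⊗ₜ[𝕜] c4mBasis hξ (.inl 0),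
        c4mBasis hξ (.inl 1) ⊗ₜ[𝕜] c4mBasis hξ (.inl 1),
        c4mBasis hξ (.inl 2) ⊗ₜ[𝕜] c4mBasis hξ (.inl 1) +
          c4mBasis hξ (.inl 0) ⊗ₜ[𝕜] c4mBasis hξ (.inl 2),
        c4mBasis hξ (.inl 3) ⊗ₜ[𝕜] c4mBasis hξ (.inl 0) +
          c4mBasis hξ (.inl 1) ⊗ₜ[𝕜] c4mBasis hξ (.inl 3)] i := by
  simp only [c4mBasis_inl]
  fin_cases i
  · simp [Algebra.TensorProduct.one_def]
  · exact comul_kA_sq hξ hΔ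
  · exact comul_kA_mul_kC hΔ
  · exact comul_kA_pow_three_mul_kC hξ hΔ

theorem comul_c4mBasis_inr (hΔ : KComulOn 𝕜 ξ Δ) (i j : Fin 2) :
    Δ (c4mBasis hξ (.inr (i, j))) =
      ∑ l, c4mBasis hξ (.inr (i, l)) ⊗ₜ[𝕜] c4mBasis hξ (.inr (l, j)) := by
  obtain ⟨Δ_a, Δ_b, Δ_c, Δ_d⟩ := hΔ
  fin_cases i <;> fin_cases j <;> simp [c4mBasis_inr, *]

theorem counit_c4mBasis_inl (hε : KCounitOn 𝕜 ξ ε) (i : Fin 4) :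
    ε (c4mBasis hξ (.inl i)) = ![(1 : 𝕜), 1, 0, 0] i := by
  obtain ⟨ε_a, -, ε_c, -⟩ := hε
  fin_cases i <;> simp [c4mBasis_inl, *]

theorem counit_c4mBasis_inr (hε : KCounitOn 𝕜 ξ ε) (i j : Fin 2) :
    ε (c4mBasis hξ (.inr (i, j))) = if i = j then (1 : 𝕜) else 0 := by
  obtain ⟨ε_a, ε_b, ε_c, ε_d⟩ := hε
  fin_cases i <;> fin_cases j <;> simp [c4mBasis_inr, *]

theorem map_c4mEquiv_comul_c4mBasis (hΔ : KComulOn 𝕜 ξ Δ) (i : C4MIdx) :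
    TensorProduct.map (c4mEquiv hξ).toLinearMap (c4mEquiv hξ).toLinearMap
      (Δ (c4mBasis hξ i)) = c4mComul 𝕜 (c4mE 𝕜 i) := by
  rcases i with i | ⟨i, j⟩
  · rw [comul_c4mBasis_inl hξ hΔ, c4mComul_c4mE_inl]
    fin_cases i <;> simp [c4mEquiv_c4mBasis]
  · simp [comul_c4mBasis_inr hξ hΔ, c4mComul_c4mE_inr, c4mEquiv_c4mBasis]

theorem c4mCounit_c4mE_eq_counit_c4mBasis (hε : KCounitOn 𝕜 ξ ε) (i : C4MIdx) :
    c4mCounit 𝕜 (c4mE 𝕜 i) = ε (c4mBasis hξ i) := by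
  rcases i with i | ⟨i, j⟩
  · rw [counit_c4mBasis_inl hξ hε, c4mCounit_c4mE_inl]
  · rw [counit_c4mBasis_inr hξ hε, c4mCounit_c4mE_inr]

end Coalgebra

end KAlg

theorem stmt_4_general (𝕜 : Type) [Field 𝕜] (ξ : 𝕜) (hξ : ξ ^ 2 = -1)
    (Δ : KAlg 𝕜 ξ →ₐ[𝕜] KAlg 𝕜 ξ ⊗[𝕜] KAlg 𝕜 ξ) (hΔ : KComulOn 𝕜 ξ Δ)
    (ε : KAlg 𝕜 ξ →ₐ[𝕜] 𝕜) (hε : KCounitOn 𝕜 ξ ε) :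
    ∃ φ : KAlg 𝕜 ξ ≃ₗ[𝕜] C4M 𝕜,
      TensorProduct.map φ.toLinearMap φ.toLinearMap ∘ₗ Δ.toLinearMap =
        c4mComul 𝕜 ∘ₗ φ.toLinearMap ∧
      c4mCounit 𝕜 ∘ₗ φ.toLinearMap = ε.toLinearMap := by
  refine ⟨KAlg.c4mEquiv hξ, (KAlg.c4mBasis hξ).ext fun i => ?_, (KAlg.c4mBasis hξ).ext fun i => ?_⟩
  · simpa [KAlg.c4mEquiv_c4mBasis] using KAlg.map_c4mEquiv_comul_c4mBasis hξ hΔ i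
  · simpa [KAlg.c4mEquiv_c4mBasis] using KAlg.c4mCounit_c4mE_eq_counit_c4mBasis hξ hε i

/-- There is an isomorphism of `𝕜`-coalgebras
`K ≅ C₄ ⊕ M*(2,𝕜)`, where `C₄` is the underlying coalgebra of Sweedler's 4-dimensional
Hopf algebra and `M*(2,𝕜)` is the 4-dimensional comatrix coalgebra. -/
theorem stmt_4 (𝕜 : Type) [Field 𝕜] [IsAlgClosed 𝕜] [CharZero 𝕜]
    (ξ : 𝕜) (hξ : IsPrimitiveRoot ξ 4)
    (Δ : KAlg 𝕜 ξ →ₐ[𝕜] KAlg 𝕜 ξ ⊗[𝕜] KAlg 𝕜 ξ) (hΔ : KComulOn 𝕜 ξ Δ)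
    (ε : KAlg 𝕜 ξ →ₐ[𝕜] 𝕜) (hε : KCounitOn 𝕜 ξ ε) :
    ∃ φ : KAlg 𝕜 ξ ≃ₗ[𝕜] C4M 𝕜,
      TensorProduct.map φ.toLinearMap φ.toLinearMap ∘ₗ Δ.toLinearMap =
        c4mComul 𝕜 ∘ₗ φ.toLinearMap ∧
      c4mCounit 𝕜 ∘ₗ φ.toLinearMap = ε.toLinearMap := by
  exact stmt_4_general 𝕜 ξ (hξ.pow four_pos rfl).eq_neg_one_of_two_right Δ hΔ ε hε
end
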